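/- arXiv:math/0703140 — 2 statements merged into one kernel-verified Lean document; each statement's English description precedes it below -/
import Mathlib

section
/- Fix β > 0 and a, b > 0, and for each k ≥ 0 let α_k be B(kβ/4 + a, kβ/4 + b)-distributed if k is even and B((k−1)β/4 + a + b, (k+1)β/4)-distributed if k is odd. Then there is a constant C depending only on β, a, b such that for every k ≥ 0 and every ψ ∈ ℝ, E{|Υ(ψ, α_k)|} ≤ C (k+1)^{−1/2}, where Υ(ψ, α) = −2 Im log(1 − α e^{iψ}) (principal branch). -/
open MeasureTheory ProbabilityTheory Filter
open scoped Real NNReal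

/-- `Υ(ψ, α) = −2 Im log(1 − α e^{iψ})` (principal branch of the logarithm). -/
noncomputable def Ups (ψ : ℝ) (z : ℂ) : ℝ :=
  -2 * (Complex.log (1 - z * Complex.exp (ψ * Complex.I))).im

/-- The `B(s,t)` distribution on `ℝ`: supported on `(−1,1)` with density
`2^{1−s−t} Γ(s+t)/(Γ(s)Γ(t)) (1−x)^{s−1}(1+x)^{t−1}` w.r.t. Lebesgue measure. -/
noncomputable def betaDist (s t : ℝ) : Measure ℝ :=
  (volume : Measure ℝ).withDensity fun x =>
    ENNReal.ofReal (if x ∈ Set.Ioo (-1 : ℝ) 1 then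
      2 ^ (1 - s - t) * Real.Gamma (s + t) / (Real.Gamma s * Real.Gamma t) *
        (1 - x) ^ (s - 1) * (1 + x) ^ (t - 1) else 0)

/-- The distribution of the Verblunsky coefficient `α_k` in the Jacobi β-ensemble model:
`B(kβ/4 + a, kβ/4 + b)` for `k` even and `B((k−1)β/4 + a + b, (k+1)β/4)` for `k` odd. -/
noncomputable def jacobiAlphaDist (β a b : ℝ) (k : ℕ) : Measure ℝ :=
  if Even k then betaDist ((k : ℝ) * β / 4 + a) ((k : ℝ) * β / 4 + b)
  else betaDist (((k : ℝ) - 1) * β / 4 + a + b) (((k : ℝ) + 1) * β / 4)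

/-- Pointwise bound on `Ups`. -/
lemma Ups_abs_le (ψ x : ℝ) (hx : |x| < 1) : |Ups ψ (x : ℂ)| ≤ π * |x| := by
  set z : ℂ := (x : ℂ) * Complex.exp (ψ * Complex.I) with hz
  have hn : ‖z‖ = |x| := by
    rw [hz, norm_mul, Complex.norm_exp_ofReal_mul_I, mul_one, Complex.norm_real, Real.norm_eq_abs]
  have hre : 0 < (1 - z).re := by
    have := Complex.re_le_norm z
    simp only [Complex.sub_re, Complex.one_re]
    linarith
  have harg : |(1 - z).arg| < π / 2 := Complex.abs_arg_lt_pi_div_two_iff.2 (Or.inl hre)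
  have h1 := Real.mul_abs_le_abs_sin harg.le
  have hpos : 0 < ‖1 - z‖ := lt_of_lt_of_le hre (Complex.re_le_norm _)
  have h2 : |Real.sin (1 - z).arg| ≤ |x| := by
    rw [Complex.sin_arg, abs_div, abs_of_pos hpos, div_le_iff₀ hpos, ← hn]
    refine (pow_le_pow_iff_left₀ (abs_nonneg _) (by positivity) two_ne_zero).1 ?_
    rw [sq_abs, mul_pow, Complex.sq_norm, Complex.sq_norm, Complex.normSq_apply,
      Complex.normSq_apply]
    simp only [Complex.sub_re, Complex.one_re, Complex.sub_im, Complex.one_im]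
    nlinarith [sq_nonneg (z.re * z.re + z.im * z.im - z.re)]
  have h3 : |(1 - z).arg| ≤ π / 2 * |x| := by
    have h4 := h1.trans h2
    have hp := Real.pi_pos
    rw [div_mul_eq_mul_div, div_le_iff₀ hp] at h4
    linarith
  unfold Ups
  rw [Complex.log_im, abs_mul]
  norm_num
  linarith

/-- The real density of `betaDist`. -/
noncomputable def bdens (s t x : ℝ) : ℝ :=
  if x ∈ Set.Ioo (-1 : ℝ) 1 then
      2 ^ (1 - s - t) * Real.Gamma (s + t) / (Real.Gamma s * Real.Gamma t) *
        (1 - x) ^ (s - 1) * (1 + x) ^ (t - 1) else 0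

lemma bdens_meas (s t : ℝ) : Measurable (bdens s t) :=
  Measurable.ite measurableSet_Ioo (by fun_prop) (by fun_prop)

lemma bdens_nonneg (s t : ℝ) (hs : 0 < s) (ht : 0 < t) (x : ℝ) : 0 ≤ bdens s t x := by
  unfold bdens
  split_ifs with h
  · have h1 := Real.Gamma_pos_of_pos hs
    have h2 := Real.Gamma_pos_of_pos ht
    have h3 := Real.Gamma_pos_of_pos (add_pos hs ht)
    have h4 : 0 < 1 - x := by linarith [h.2]
    have h5 : 0 < 1 + x := by linarith [h.1]
    positivity
  · exact le_rfl

lemma bdens_eq (s t : ℝ) (x : ℝ) :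
    bdens s t x = 1 / 2 * betaPDFReal s t ((-1 / 2) * x + 1 / 2) := by
  unfold bdens betaPDFReal
  by_cases h : x ∈ Set.Ioo (-1 : ℝ) 1
  · have h4 : 0 < 1 - x := by linarith [h.2]
    have h5 : 0 < 1 + x := by linarith [h.1]
    rw [if_pos h, if_pos ⟨by linarith, by linarith⟩]
    have e1 : (-1 / 2) * x + 1 / 2 = (1 - x) / 2 := by ring
    have e2 : 1 - (1 - x) / 2 = (1 + x) / 2 := by ring
    rw [e1, e2, Real.div_rpow h4.le (by norm_num), Real.div_rpow h5.le (by norm_num)]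
    have e3 : (2 : ℝ) ^ (1 - s - t) * ((2 : ℝ) ^ (s - 1) * (2 : ℝ) ^ (t - 1) * 2) = 1 := by
      nth_rewrite 4 [← Real.rpow_one 2]
      rw [← Real.rpow_add (by norm_num), ← Real.rpow_add (by norm_num),
        ← Real.rpow_add (by norm_num)]
      ring_nf
      simp
    have e4 : (2 : ℝ) ^ (1 - s - t) = 1 / ((2 : ℝ) ^ (s - 1) * (2 : ℝ) ^ (t - 1) * 2) := by
      rw [eq_div_iff (by positivity)]; exact e3
    rw [e4]
    unfold beta
    rw [one_div_div]
    ring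
  · rw [if_neg h, if_neg, mul_zero]
    rintro ⟨h1, h2⟩
    exact h ⟨by linarith, by linarith⟩

lemma integral_betaPDFReal (s t : ℝ) (hs : 0 < s) (ht : 0 < t) :
    ∫ x, betaPDFReal s t x = 1 := by
  rw [integral_eq_lintegral_of_nonneg_ae]
  · have := lintegral_betaPDF_eq_one hs ht
    unfold betaPDF at this
    rw [this]; simp
  · refine Eventually.of_forall fun x => ?_
    by_cases h : 0 < x ∧ x < 1
    · exact (betaPDFReal_pos h.1 h.2 hs ht).le
    · simp [betaPDFReal, h]
  · exact (measurable_betaPDFReal s t).aestronglyMeasurable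

lemma integral_bdens (s t : ℝ) (hs : 0 < s) (ht : 0 < t) : ∫ x, bdens s t x = 1 := by
  simp_rw [bdens_eq]
  rw [integral_const_mul,
    Measure.integral_comp_mul_left (fun u => betaPDFReal s t (u + 1 / 2)) (-1 / 2),
    integral_add_right_eq_self (fun u => betaPDFReal s t u), integral_betaPDFReal s t hs ht]
  norm_num

lemma bdens_mul (s t : ℝ) (hs : 0 < s) (ht : 0 < t) (x : ℝ) :
    bdens s t x * (1 - x ^ 2) = 4 * s * t / ((s + t) * (s + t + 1)) * bdens (s + 1) (t + 1) x := by
  unfold bdens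
  split_ifs with h
  · have h4 : 0 < 1 - x := by linarith [h.2]
    have h5 : 0 < 1 + x := by linarith [h.1]
    have h1 := Real.Gamma_pos_of_pos hs
    have h2 := Real.Gamma_pos_of_pos ht
    have e1 : (1 - x) ^ (s + 1 - 1) = (1 - x) ^ (s - 1) * (1 - x) := by
      rw [← Real.rpow_add_one h4.ne']; ring_nf
    have e2 : (1 + x) ^ (t + 1 - 1) = (1 + x) ^ (t - 1) * (1 + x) := by
      rw [← Real.rpow_add_one h5.ne']; ring_nf
    have e3 : (2 : ℝ) ^ (1 - s - t) = 2 ^ (1 - (s + 1) - (t + 1)) * 4 := by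
      rw [show 1 - s - t = (1 - (s + 1) - (t + 1)) + 2 by ring, Real.rpow_add (by norm_num)]
      norm_num
    have e4 : Real.Gamma (s + 1 + (t + 1)) = (s + t + 1) * ((s + t) * Real.Gamma (s + t)) := by
      rw [← Real.Gamma_add_one (by positivity), ← Real.Gamma_add_one (by positivity)]
      ring_nf
    rw [e1, e2, e3, e4, Real.Gamma_add_one hs.ne', Real.Gamma_add_one ht.ne']
    field_simp
    ring
  · simp

lemma integral_betaDist (s t : ℝ) (hs : 0 < s) (ht : 0 < t) :
    ∫ x, (1 - x ^ 2) ∂(betaDist s t) = 4 * s * t / ((s + t) * (s + t + 1)) := by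
  have : betaDist s t = volume.withDensity fun x => ENNReal.ofReal (bdens s t x) := rfl
  rw [this, integral_withDensity_eq_integral_toReal_smul (bdens_meas s t).ennreal_ofReal
    (Eventually.of_forall fun x => ENNReal.ofReal_lt_top)]
  simp_rw [ENNReal.toReal_ofReal (bdens_nonneg s t hs ht _), smul_eq_mul, bdens_mul s t hs ht]
  rw [integral_const_mul, integral_bdens _ _ (by linarith) (by linarith), mul_one]

lemma ae_betaDist (s t : ℝ) : ∀ᵐ x ∂(betaDist s t), |x| < 1 := by
  have : betaDist s t = volume.withDensity fun x => ENNReal.ofReal (bdens s t x) := rfl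
  rw [this, ae_withDensity_iff (bdens_meas s t).ennreal_ofReal]
  refine Eventually.of_forall fun x hx => ?_
  by_contra h
  apply hx
  rw [abs_lt] at h
  have : x ∉ Set.Ioo (-1 : ℝ) 1 := h
  simp [bdens, this]

lemma Ups_moment {Ω : Type*} [MeasurableSpace Ω] (μ : Measure Ω) [IsProbabilityMeasure μ]
    (X : Ω → ℝ) (hX : Measurable X) (s t : ℝ) (hs : 0 < s) (ht : 0 < t)
    (hlaw : Measure.map X μ = betaDist s t) (ψ e : ℝ) (he : 0 < e) :
    ∫ ω, |Ups ψ (X ω)| ∂μ ≤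
      π * (1 / (2 * e) + e / 2 * (1 - 4 * s * t / ((s + t) * (s + t + 1)))) := by
  have hae : ∀ᵐ ω ∂μ, |X ω| < 1 := by
    have := ae_betaDist s t
    rw [← hlaw] at this
    exact ae_of_ae_map hX.aemeasurable this
  have hint : Integrable (fun ω => X ω ^ 2) μ := by
    refine Integrable.of_bound (C := 1) (by fun_prop) ?_
    filter_upwards [hae] with ω h
    rw [Real.norm_eq_abs, abs_pow]
    exact pow_le_one₀ (abs_nonneg _) h.le
  have hval : ∫ ω, X ω ^ 2 ∂μ = 1 - 4 * s * t / ((s + t) * (s + t + 1)) := by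
    have h1 := integral_betaDist s t hs ht
    rw [← hlaw, integral_map hX.aemeasurable (by fun_prop),
      integral_sub (integrable_const _) hint] at h1
    simp at h1
    linarith
  calc ∫ ω, |Ups ψ (X ω)| ∂μ ≤ ∫ ω, π * (1 / (2 * e) + e / 2 * X ω ^ 2) ∂μ := by
        refine integral_mono_of_nonneg (Eventually.of_forall fun _ => abs_nonneg _)
          (((integrable_const _).add (hint.const_mul _)).const_mul _) ?_
        filter_upwards [hae] with ω h
        refine (Ups_abs_le ψ _ h).trans (mul_le_mul_of_nonneg_left ?_ Real.pi_pos.le)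
        have : 1 / (2 * e) + e / 2 * X ω ^ 2 - |X ω| = (e * |X ω| - 1) ^ 2 / (2 * e) := by
          rw [← sq_abs (X ω)]
          field_simp
          ring
        have : 0 ≤ (e * |X ω| - 1) ^ 2 / (2 * e) := by positivity
        linarith
    _ = _ := by
        rw [integral_const_mul, integral_add (integrable_const _) (hint.const_mul _),
          integral_const_mul, hval]
        simp

lemma second_moment_le (s t c n D : ℝ) (hs : 0 < s) (ht : 0 < t) (hc : 0 < c) (hn : 0 < n)
    (hN : c * n ≤ s + t) (hn1 : 1 ≤ n) (hD : (s - t) ^ 2 ≤ D) :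
    1 - 4 * s * t / ((s + t) * (s + t + 1)) ≤ ((D / c + 1) / c) / n := by
  have hD0 : 0 ≤ D := (sq_nonneg _).trans hD
  have hst : 0 < s + t := by linarith
  calc 1 - 4 * s * t / ((s + t) * (s + t + 1))
      = ((s - t) ^ 2 / (s + t) + 1) / (s + t + 1) := by field_simp; ring
    _ ≤ (D / c + 1) / (c * n) := by
        have : c ≤ s + t := by nlinarith
        gcongr
        linarith
    _ = _ := by field_simp

/-- there is `C = C(β,a,b)` such that if `α_k` has the Jacobi-`β`-ensemble
Verblunsky law, then `E{|Υ(ψ,α_k)|} ≤ C (k+1)^{−1/2}`. -/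
theorem beta_Ups_first_moment_le {Ω : Type*} [MeasurableSpace Ω] (μ : Measure Ω)
    [IsProbabilityMeasure μ] (β a b : ℝ) (hβ : 0 < β) (ha : 0 < a) (hb : 0 < b)
    (α : ℕ → Ω → ℝ) (hα : ∀ k, Measurable (α k))
    (hlaw : ∀ k, Measure.map (α k) μ = jacobiAlphaDist β a b k) :
    ∃ C : ℝ, ∀ (k : ℕ) (ψ : ℝ),
      ∫ ω, |Ups ψ (α k ω)| ∂μ ≤ C / Real.sqrt ((k : ℝ) + 1) := by
  obtain ⟨c, hc, hc1, hc2⟩ : ∃ c : ℝ, 0 < c ∧ c ≤ β / 2 ∧ c ≤ a + b :=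
    ⟨min (β / 2) (a + b), lt_min (by linarith) (by linarith), min_le_left _ _, min_le_right _ _⟩
  set D : ℝ := (a - b) ^ 2 + (a + b - β / 2) ^ 2 with hD
  have key : ∀ k : ℕ, ∃ s t : ℝ, 0 < s ∧ 0 < t ∧ c * ((k : ℝ) + 1) ≤ s + t ∧
      (s - t) ^ 2 ≤ D ∧ jacobiAlphaDist β a b k = betaDist s t := by
    intro k
    have hk0 : (0 : ℝ) ≤ k := Nat.cast_nonneg k
    have hN : c * ((k : ℝ) + 1) ≤ k * β / 2 + (a + b) := by nlinarith
    unfold jacobiAlphaDist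
    by_cases hk : Even k
    · refine ⟨_, _, ?_, ?_, ?_, ?_, if_pos hk⟩
      · positivity
      · positivity
      · linarith
      · rw [hD]
        nlinarith [sq_nonneg (a + b - β / 2)]
    · have hk1 : (1 : ℝ) ≤ k := by
        have : k ≠ 0 := by rintro rfl; exact hk (by simp)
        exact_mod_cast Nat.one_le_iff_ne_zero.2 this
      have hk2 : 0 ≤ ((k : ℝ) - 1) * β / 4 := by
        have : 0 ≤ (k : ℝ) - 1 := by linarith
        positivity
      refine ⟨_, _, ?_, ?_, ?_, ?_, if_neg hk⟩
      · linarith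
      · positivity
      · linarith
      · rw [hD]
        nlinarith [sq_nonneg (a - b)]
  refine ⟨π * (1 / 2 + (D / c + 1) / c / 2), fun k ψ => ?_⟩
  obtain ⟨s, t, hs, ht, hN, hDk, hd⟩ := key k
  have hn : (0 : ℝ) < (k : ℝ) + 1 := by positivity
  have he : 0 < Real.sqrt ((k : ℝ) + 1) := Real.sqrt_pos.2 hn
  have h1 := Ups_moment μ (α k) (hα k) s t hs ht ((hlaw k).trans hd) ψ _ he
  have h2 := second_moment_le s t c ((k : ℝ) + 1) D hs ht hc hn hN (by simp) hDk
  refine h1.trans ?_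
  have h3 := Real.sq_sqrt hn.le
  set e := Real.sqrt ((k : ℝ) + 1) with hedef
  rw [← h3] at h2
  calc π * (1 / (2 * e) + e / 2 * (1 - 4 * s * t / ((s + t) * (s + t + 1))))
      ≤ π * (1 / (2 * e) + e / 2 * ((D / c + 1) / c / e ^ 2)) := by
        have := Real.pi_pos
        gcongr
    _ = _ := by
        generalize (D / c + 1) / c = M
        field_simp
end

section
/- For every ε > 0 and δ > 0 there is a constant C = C(ε, δ) such that: whenever s, t ∈ (ε, ∞) satisfy |s − t| ≤ δ and X is a B(s,t)-distributed real random variable, E{−X² log(1 − X²)} ≤ C (s + t)^{−2}. -/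
open MeasureTheory ProbabilityTheory Filter
open scoped Real NNReal

/-- Unnormalized density. -/
noncomputable def gw (s t x : ℝ) : ℝ :=
  if x ∈ Set.Ioo (-1 : ℝ) 1 then (1 - x) ^ (s - 1) * (1 + x) ^ (t - 1) else 0

/-- Its total mass. -/
noncomputable def Jw (s t : ℝ) : ℝ := 2 ^ (s + t - 1) * beta s t

lemma gw_eq {s t : ℝ} (hs : 0 < s) (ht : 0 < t) (x : ℝ) :
    gw s t x = (beta t s * 2 ^ (s + t - 2)) * betaPDFReal t s ((x + 1) * 2⁻¹) := by
  unfold gw betaPDFReal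
  have hb := (beta_pos ht hs).ne'
  by_cases hx : x ∈ Set.Ioo (-1 : ℝ) 1
  · have h1 : 0 < (x + 1) * 2⁻¹ ∧ (x + 1) * 2⁻¹ < 1 := by
      constructor <;> linarith [hx.1, hx.2]
    rw [if_pos hx, if_pos h1]
    have e1 : 1 - (x + 1) * 2⁻¹ = (1 - x) * 2⁻¹ := by ring
    rw [e1, Real.mul_rpow (by linarith [hx.1]) (by norm_num),
      Real.mul_rpow (by linarith [hx.2]) (by norm_num), Real.inv_rpow (by norm_num),
      Real.inv_rpow (by norm_num)]
    have e2 : (2:ℝ) ^ (s + t - 2) = 2 ^ (s - 1) * 2 ^ (t - 1) := by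
      rw [← Real.rpow_add (by norm_num)]; congr 1; ring
    rw [e2, add_comm x 1]
    have p1 : (2:ℝ) ^ (s - 1) ≠ 0 := (Real.rpow_pos_of_pos (by norm_num) _).ne'
    have p2 : (2:ℝ) ^ (t - 1) ≠ 0 := (Real.rpow_pos_of_pos (by norm_num) _).ne'
    field_simp
  · have h1 : ¬ (0 < (x + 1) * 2⁻¹ ∧ (x + 1) * 2⁻¹ < 1) := by
      rintro ⟨h1, h2⟩
      exact hx ⟨by linarith, by linarith⟩
    rw [if_neg hx, if_neg h1, mul_zero]

lemma betaPDFReal_nonneg' {s t : ℝ} (hs : 0 < s) (ht : 0 < t) (x : ℝ) :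
    0 ≤ betaPDFReal s t x := by
  by_cases h : 0 < x ∧ x < 1
  · exact (betaPDFReal_pos h.1 h.2 hs ht).le
  · simp [betaPDFReal, h]

lemma integrable_pdf {s t : ℝ} (hs : 0 < s) (ht : 0 < t) :
    Integrable (betaPDFReal s t) := by
  refine ⟨(measurable_betaPDFReal s t).aestronglyMeasurable, ?_⟩
  rw [hasFiniteIntegral_iff_ofReal (Eventually.of_forall (betaPDFReal_nonneg' hs ht))]
  have := lintegral_betaPDF_eq_one hs ht
  unfold betaPDF at this
  rw [this]; simp

lemma integral_pdf {s t : ℝ} (hs : 0 < s) (ht : 0 < t) :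
    ∫ x, betaPDFReal s t x = 1 := by
  rw [integral_eq_lintegral_of_nonneg_ae (Eventually.of_forall (betaPDFReal_nonneg' hs ht))
    (measurable_betaPDFReal s t).aestronglyMeasurable]
  have := lintegral_betaPDF_eq_one hs ht
  unfold betaPDF at this
  rw [this]; simp

lemma integrable_gw {s t : ℝ} (hs : 0 < s) (ht : 0 < t) : Integrable (gw s t) := by
  have := (((integrable_pdf ht hs).comp_mul_right' (R := (2:ℝ)⁻¹) (by norm_num)).comp_add_right
    1).const_mul (beta t s * 2 ^ (s + t - 2))
  refine this.congr (Eventually.of_forall fun x => ?_)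
  exact (gw_eq hs ht x).symm

lemma integral_gw {s t : ℝ} (hs : 0 < s) (ht : 0 < t) : ∫ x, gw s t x = Jw s t := by
  simp_rw [gw_eq hs ht]
  rw [integral_const_mul, integral_add_right_eq_self (fun x => betaPDFReal t s (x * 2⁻¹)),
    Measure.integral_comp_mul_right, integral_pdf ht hs]
  have e2 : (2:ℝ) ^ (s + t - 1) = 2 ^ (s + t - 2) * 2 := by
    rw [← Real.rpow_add_one (by norm_num)]; congr 1; ring
  unfold Jw
  rw [e2]
  have : beta t s = beta s t := by unfold beta; rw [mul_comm, add_comm]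
  rw [this]; simp; ring

lemma Jw_pos {s t : ℝ} (hs : 0 < s) (ht : 0 < t) : 0 < Jw s t :=
  mul_pos (Real.rpow_pos_of_pos (by norm_num) _) (beta_pos hs ht)

lemma Jw_left {s t : ℝ} (hs : 0 < s) (ht : 0 < t) :
    Jw (s + 1) t = 2 * s / (s + t) * Jw s t := by
  unfold Jw beta
  have e2 : (2:ℝ) ^ (s + 1 + t - 1) = 2 ^ (s + t - 1) * 2 := by
    rw [← Real.rpow_add_one (by norm_num)]; congr 1; ring
  have e3 : s + 1 + t = (s + t) + 1 := by ring
  rw [e2, e3, Real.Gamma_add_one hs.ne', Real.Gamma_add_one (by positivity)]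
  have := (Real.Gamma_pos_of_pos (add_pos hs ht)).ne'
  field_simp

lemma Jw_right {s t : ℝ} (hs : 0 < s) (ht : 0 < t) :
    Jw s (t + 1) = 2 * t / (s + t) * Jw s t := by
  have h : ∀ a b : ℝ, Jw a b = Jw b a := by
    intro a b; unfold Jw beta; rw [add_comm a b, mul_comm (Real.Gamma a)]
  rw [h, Jw_left ht hs, h t s, add_comm t s]

lemma gw_nonneg (s t x : ℝ) : 0 ≤ gw s t x := by
  unfold gw
  split_ifs with h
  · exact mul_nonneg (Real.rpow_nonneg (by linarith [h.2]) _)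
      (Real.rpow_nonneg (by linarith [h.1]) _)
  · exact le_rfl

lemma integral_betaDist_s19 {s t : ℝ} (hs : 0 < s) (ht : 0 < t) (f : ℝ → ℝ) :
    ∫ x, f x ∂(betaDist s t) = (Jw s t)⁻¹ * ∫ x, f x * gw s t x := by
  have hd : ∀ x : ℝ, (if x ∈ Set.Ioo (-1 : ℝ) 1 then
      2 ^ (1 - s - t) * Real.Gamma (s + t) / (Real.Gamma s * Real.Gamma t) *
        (1 - x) ^ (s - 1) * (1 + x) ^ (t - 1) else 0) = (Jw s t)⁻¹ * gw s t x := by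
    intro x
    unfold gw
    split_ifs
    · unfold Jw beta
      have e : (2:ℝ) ^ (1 - s - t) = (2 ^ (s + t - 1))⁻¹ := by
        rw [← Real.rpow_neg (by norm_num)]; congr 1; ring
      rw [e, mul_inv, inv_div]; ring
    · simp
  unfold betaDist
  simp_rw [hd]
  have hm : Measurable (gw s t) := by
    unfold gw
    exact Measurable.ite measurableSet_Ioo (by fun_prop) (by fun_prop)
  rw [integral_withDensity_eq_integral_toReal_smul (by fun_prop) (by simp), ← integral_const_mul]
  congr 1
  ext x
  rw [ENNReal.toReal_ofReal (mul_nonneg (inv_nonneg.2 (Jw_pos hs ht).le) (gw_nonneg s t x)),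
    smul_eq_mul]
  ring

lemma neg_sq_log_nonneg {x : ℝ} (hx : x ∈ Set.Ioo (-1 : ℝ) 1) :
    0 ≤ -(x ^ 2 * Real.log (1 - x ^ 2)) := by
  have h : x ^ 2 < 1 := by nlinarith [hx.1, hx.2]
  have := Real.log_nonpos (x := 1 - x ^ 2) (by linarith) (by nlinarith)
  nlinarith [sq_nonneg x]

lemma integral_le_of {s t : ℝ} (hs : 0 < s) (ht : 0 < t) {h : ℝ → ℝ} (hi : Integrable h)
    (hle : ∀ x ∈ Set.Ioo (-1 : ℝ) 1, -(x ^ 2 * Real.log (1 - x ^ 2)) * gw s t x ≤ h x)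
    (h0 : ∀ x, x ∉ Set.Ioo (-1 : ℝ) 1 → h x = 0) :
    ∫ x, -(x ^ 2 * Real.log (1 - x ^ 2)) ∂(betaDist s t) ≤ (Jw s t)⁻¹ * ∫ x, h x := by
  rw [integral_betaDist_s19 hs ht]
  refine mul_le_mul_of_nonneg_left ?_ (inv_nonneg.2 (Jw_pos hs ht).le)
  refine integral_mono_of_nonneg (Eventually.of_forall fun x => ?_) hi
    (Eventually.of_forall fun x => ?_)
  · by_cases hx : x ∈ Set.Ioo (-1 : ℝ) 1
    · exact mul_nonneg (neg_sq_log_nonneg hx) (gw_nonneg _ _ _)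
    · simp [gw, hx]
  · by_cases hx : x ∈ Set.Ioo (-1 : ℝ) 1
    · exact hle x hx
    · simp [gw, hx, h0 x hx]

lemma caseA {s t δ : ℝ} (hs : 1 ≤ s) (ht : 1 ≤ t) (hδ : 0 < δ) (hst : |s - t| ≤ δ) :
    ∫ x, -(x ^ 2 * Real.log (1 - x ^ 2)) ∂(betaDist (s + 1) (t + 1)) ≤
      ((2 + δ) ^ 2 * (9 + 14 * δ ^ 2 + δ ^ 4) / 4) / ((s + 1) + (t + 1)) ^ 2 := by
  have hs0 : 0 < s := by linarith
  have ht0 : 0 < t := by linarith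
  have i0 := (integrable_gw (s := s + 1 + 1 + 1 + 1) (t := t) (by positivity) (by positivity))
  have i1 := (integrable_gw (s := s + 1 + 1 + 1) (t := t + 1) (by positivity) (by positivity)).const_mul 4
  have i2 := (integrable_gw (s := s + 1 + 1) (t := t + 1 + 1) (by positivity) (by positivity)).const_mul 6
  have i3 := (integrable_gw (s := s + 1) (t := t + 1 + 1 + 1) (by positivity) (by positivity)).const_mul 4
  have i4 := (integrable_gw (s := s) (t := t + 1 + 1 + 1 + 1) (by positivity) (by positivity))
  have key := integral_le_of (s := s + 1) (t := t + 1) (by positivity) (by positivity)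
    (((((i0.sub i1).add i2).sub i3).add i4).const_mul (1 / 16)) ?_ ?_
  · refine key.trans ?_
    rw [integral_const_mul, integral_add' (((i0.sub i1).add i2).sub i3) i4,
      integral_sub' ((i0.sub i1).add i2) i3, integral_add' (i0.sub i1) i2, integral_sub' i0 i1,
      integral_const_mul, integral_const_mul, integral_const_mul]
    rw [integral_gw (by positivity) (by positivity), integral_gw (by positivity) (by positivity),
      integral_gw (by positivity) (by positivity), integral_gw (by positivity) (by positivity),
      integral_gw (by positivity) (by positivity)]
    rw [Jw_left (s := s + 1 + 1 + 1) (by positivity) (by positivity),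
      Jw_left (s := s + 1 + 1) (by positivity) (by positivity),
      Jw_left (s := s + 1 + 1) (by positivity) (by positivity),
      Jw_left (s := s + 1) (by positivity) (by positivity),
      Jw_left (s := s + 1) (by positivity) (by positivity),
      Jw_left (s := s + 1) (by positivity) (by positivity),
      Jw_left (s := s) (by positivity) (by positivity),
      Jw_left (s := s) (by positivity) (by positivity),
      Jw_left (s := s) (by positivity) (by positivity),
      Jw_left (s := s) (by positivity) (by positivity),
      Jw_right (t := t + 1 + 1 + 1) (by positivity) (by positivity),
      Jw_right (t := t + 1 + 1) (by positivity) (by positivity),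
      Jw_right (t := t + 1) (by positivity) (by positivity),
      Jw_right (t := t) (by positivity) (by positivity)]
    have hJ := Jw_pos hs0 ht0
    set J := Jw s t
    set n := s + t with hn
    set D := s - t with hD
    have e : ∀ y, y = (6 * n + 3 * n ^ 2 + 8 * D ^ 2 + 6 * D ^ 2 * n + D ^ 4) /
        (4 * (s * t) * (n + 2) * (n + 3)) → y ≤ ((2 + δ) ^ 2 * (9 + 14 * δ ^ 2 + δ ^ 4) / 4) / (s + 1 + (t + 1)) ^ 2 := by
      rintro y rfl
      have hn2 : 2 ≤ n := by linarith
      have hD2 : D ^ 2 ≤ δ ^ 2 := by rw [← sq_abs D]; gcongr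
      have hD4 : D ^ 4 ≤ δ ^ 4 := by
        have : (D ^ 2) ^ 2 ≤ (δ ^ 2) ^ 2 := by gcongr
        nlinarith
      obtain ⟨hl, hr⟩ := abs_le.1 hst
      have h1 : n ≤ (2 + δ) * s := by nlinarith
      have h2 : n ≤ (2 + δ) * t := by nlinarith
      have h3 : n ^ 2 ≤ (2 + δ) ^ 2 * (s * t) := by
        calc n ^ 2 = n * n := by ring
          _ ≤ ((2 + δ) * s) * ((2 + δ) * t) := by gcongr
          _ = _ := by ring
      have hN : 6 * n + 3 * n ^ 2 + 8 * D ^ 2 + 6 * D ^ 2 * n + D ^ 4 ≤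
          n ^ 2 * (9 + 14 * δ ^ 2 + δ ^ 4) := by
        have a1 : n ≤ n ^ 2 := by nlinarith
        have a2 : 1 ≤ n ^ 2 := by nlinarith
        have a3 : D ^ 2 * n ≤ δ ^ 2 * n ^ 2 := by gcongr
        have a4 : D ^ 2 * 1 ≤ δ ^ 2 * n ^ 2 := by gcongr
        have a5 : D ^ 4 * 1 ≤ δ ^ 4 * n ^ 2 := by gcongr
        linarith
      have hs' : s + 1 + (t + 1) = n + 2 := by ring
      rw [hs', div_le_div_iff₀ (by positivity) (by positivity)]
      have hP : 0 ≤ 9 + 14 * δ ^ 2 + δ ^ 4 := by positivity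
      calc _ ≤ (((2 + δ) ^ 2 * (s * t)) * (9 + 14 * δ ^ 2 + δ ^ 4)) * (n + 2) ^ 2 := by
            gcongr
            exact hN.trans (by gcongr)
        _ ≤ (((2 + δ) ^ 2 * (s * t)) * (9 + 14 * δ ^ 2 + δ ^ 4)) * ((n + 2) * (n + 3)) := by
            gcongr; nlinarith
        _ = _ := by ring
    apply e
    rw [hn, hD]
    clear_value J
    have q0 : s + t ≠ 0 := by positivity
    have q1 : s + t + 1 ≠ 0 := by positivity
    have q2 : s + t + 2 ≠ 0 := by positivity
    have q3 : s + t + 3 ≠ 0 := by positivity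
    have r : ∀ i : ℝ, s + (t + i) = s + t + i := fun i => by ring
    rw [show s + (t + 1) = s + t + 1 by ring, show s + (t + 1 + 1) = s + t + 2 by ring,
      show s + (t + 1 + 1 + 1) = s + t + 3 by ring,
      show s + 1 + t = s + t + 1 by ring, show s + 1 + 1 + t = s + t + 2 by ring,
      show s + 1 + 1 + 1 + t = s + t + 3 by ring,
      show s + 1 + (t + 1) = s + t + 2 by ring,
      show s + 1 + (t + 1 + 1) = s + t + 3 by ring,
      show s + 1 + 1 + (t + 1) = s + t + 3 by ring]
    field_simp
    ring
  · intro x hx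
    have hu : 0 < 1 - x := by linarith [hx.2]
    have hv : 0 < 1 + x := by linarith [hx.1]
    simp only [Pi.add_apply, Pi.sub_apply, gw, if_pos hx]
    have f1 : ∀ {a y : ℝ}, 0 < y → y ^ (a + 1 - 1) = y ^ (a - 1) * y := by
      intro a y hy
      rw [← Real.rpow_add_one hy.ne']; congr 1; ring
    simp only [f1 hu, f1 hv]
    set A := (1 - x) ^ (s - 1)
    set B := (1 + x) ^ (t - 1)
    have hA : 0 < A := Real.rpow_pos_of_pos hu _
    have hB : 0 < B := Real.rpow_pos_of_pos hv _
    have huv : 0 < 1 - x ^ 2 := by nlinarith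
    have hlog : -Real.log (1 - x ^ 2) * (1 - x ^ 2) ≤ x ^ 2 := by
      have := Real.one_sub_inv_le_log_of_pos huv
      have h2 : (1 - (1 - x ^ 2)⁻¹) * (1 - x ^ 2) ≤ Real.log (1 - x ^ 2) * (1 - x ^ 2) := by
        gcongr
      rw [sub_mul, inv_mul_cancel₀ huv.ne'] at h2
      linarith
    calc _ = (x ^ 2 * (A * B)) * (-Real.log (1 - x ^ 2) * (1 - x ^ 2)) := by ring
      _ ≤ (x ^ 2 * (A * B)) * x ^ 2 := by gcongr
      _ = _ := by ring
  · intro x hx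
    simp only [Pi.add_apply, Pi.sub_apply, gw, if_neg hx]
    ring

lemma caseB {s t η : ℝ} (hη : 0 < η) (hs : η < s) (ht : η < t) :
    ∫ x, -(x ^ 2 * Real.log (1 - x ^ 2)) ∂(betaDist s t) ≤
      (Jw s t)⁻¹ * (1 / η * Jw (s - η) (t - η)) := by
  have hs' : 0 < s - η := by linarith
  have ht' : 0 < t - η := by linarith
  rw [← integral_gw hs' ht', ← integral_const_mul]
  refine integral_le_of (by linarith) (by linarith) ((integrable_gw hs' ht').const_mul _) ?_ ?_
  · intro x hx
    have hu : 0 < 1 - x := by linarith [hx.2]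
    have hv : 0 < 1 + x := by linarith [hx.1]
    simp only [gw, if_pos hx]
    have f1 : ∀ {a y : ℝ}, 0 < y → y ^ (a - 1) = y ^ (a - η - 1) * y ^ η := by
      intro a y hy
      rw [← Real.rpow_add hy]; congr 1; ring
    rw [f1 (a := s) hu, f1 (a := t) hv]
    set A := (1 - x) ^ (s - η - 1)
    set B := (1 + x) ^ (t - η - 1)
    have hA : 0 < A := Real.rpow_pos_of_pos hu _
    have hB : 0 < B := Real.rpow_pos_of_pos hv _
    have huv : 0 < 1 - x ^ 2 := by nlinarith
    have hw : 0 < (1 - x ^ 2) ^ η := Real.rpow_pos_of_pos huv _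
    have e : (1 - x) ^ η * (1 + x) ^ η = (1 - x ^ 2) ^ η := by
      rw [← Real.mul_rpow hu.le hv.le]; congr 1; ring
    have hlog : -Real.log (1 - x ^ 2) * (1 - x ^ 2) ^ η ≤ 1 / η := by
      have := Real.log_le_rpow_div (x := (1 - x ^ 2)⁻¹) (by positivity) hη
      rw [Real.log_inv, Real.inv_rpow huv.le] at this
      calc _ ≤ (((1 - x ^ 2) ^ η)⁻¹ / η) * (1 - x ^ 2) ^ η := by gcongr
        _ = _ := by field_simp
    have hx1 : x ^ 2 ≤ 1 := by linarith
    calc _ = (x ^ 2 * (A * B)) * (-Real.log (1 - x ^ 2) * ((1 - x) ^ η * (1 + x) ^ η)) := by ring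
      _ ≤ (x ^ 2 * (A * B)) * (1 / η) := by rw [e]; gcongr
      _ ≤ (1 * (A * B)) * (1 / η) := by gcongr
      _ = _ := by ring
  · intro x hx
    simp [gw, hx]

lemma Jw_cont (a : ℝ) : ContinuousOn (fun p : ℝ × ℝ => Jw (p.1 - a) (p.2 - a))
    {p | a < p.1 ∧ a < p.2} := by
  have hG : ∀ y : ℝ, 0 < y → ContinuousAt Real.Gamma y := fun y hy =>
    (Real.differentiableAt_Gamma (fun m => by
      have : (0:ℝ) ≤ m := Nat.cast_nonneg m
      linarith)).continuousAt
  intro p hp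
  have h1 : 0 < p.1 - a := by linarith [hp.1]
  have h2 : 0 < p.2 - a := by linarith [hp.2]
  apply ContinuousAt.continuousWithinAt
  unfold Jw beta
  refine ContinuousAt.mul ?_ (ContinuousAt.div (ContinuousAt.mul ?_ ?_) ?_ ?_)
  · exact ContinuousAt.rpow (by fun_prop) (by fun_prop) (Or.inl (by norm_num))
  · exact ContinuousAt.comp (f := fun p : ℝ × ℝ => p.1 - a) (hG _ h1) (by fun_prop)
  · exact ContinuousAt.comp (f := fun p : ℝ × ℝ => p.2 - a) (hG _ h2) (by fun_prop)
  · exact ContinuousAt.comp (f := fun p : ℝ × ℝ => p.1 - a + (p.2 - a)) (hG _ (by positivity))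
      (by fun_prop)
  · exact (Real.Gamma_pos_of_pos (by positivity)).ne'

/-- for every `ε, δ > 0` there is `C = C(ε,δ)` such that whenever
`s, t ∈ (ε, ∞)` with `|s − t| ≤ δ` and `X ~ B(s,t)`, one has
`E{−X² log(1 − X²)} ≤ C (s+t)^{−2}`. -/
theorem beta_neg_sq_log_moment_le (ε δ : ℝ) (hε : 0 < ε) (hδ : 0 < δ) :
    ∃ C : ℝ, ∀ s t : ℝ, ε < s → ε < t → |s - t| ≤ δ →
      ∫ x, -(x ^ 2 * Real.log (1 - x ^ 2)) ∂(betaDist s t) ≤ C / (s + t) ^ 2 := by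
  have hη : 0 < ε / 2 := by positivity
  obtain ⟨M, hM⟩ := (isCompact_Icc (a := ((ε, ε) : ℝ × ℝ)) (b := (2 + δ, 2 + δ))).exists_bound_of_continuousOn
    (f := fun p : ℝ × ℝ => (Jw p.1 p.2)⁻¹ * (1 / (ε / 2) * Jw (p.1 - ε / 2) (p.2 - ε / 2))) (by
      refine ContinuousOn.mul (ContinuousOn.inv₀ ?_ ?_) (ContinuousOn.mul continuousOn_const ?_)
      · have := Jw_cont 0
        simp only [sub_zero] at this
        refine this.mono ?_
        rintro ⟨a, b⟩ ⟨⟨h1, h2⟩, -⟩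
        exact ⟨lt_of_lt_of_le hε h1, lt_of_lt_of_le hε h2⟩
      · rintro ⟨a, b⟩ ⟨⟨h1, h2⟩, -⟩
        exact (Jw_pos (lt_of_lt_of_le hε h1) (lt_of_lt_of_le hε h2)).ne'
      · refine (Jw_cont (ε / 2)).mono ?_
        rintro ⟨a, b⟩ ⟨⟨h1, h2⟩, -⟩
        simp only at h1 h2
        exact ⟨show ε / 2 < a by linarith, show ε / 2 < b by linarith⟩)
  set C1 := (2 + δ) ^ 2 * (9 + 14 * δ ^ 2 + δ ^ 4) / 4
  set C2 := |M| * (2 * (2 + δ)) ^ 2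
  refine ⟨max C1 C2, fun s t hs ht hst => ?_⟩
  have hs0 : 0 < s := by linarith
  have ht0 : 0 < t := by linarith
  by_cases h : 2 ≤ s ∧ 2 ≤ t
  · have := caseA (s := s - 1) (t := t - 1) (δ := δ) (by linarith [h.1]) (by linarith [h.2]) hδ
      (by simpa using hst)
    simp only [sub_add_cancel] at this
    refine this.trans ?_
    gcongr
    exact le_max_left _ _
  · obtain ⟨hl, hr⟩ := abs_le.1 hst
    have hb : s ≤ 2 + δ ∧ t ≤ 2 + δ := by
      by_cases h2 : 2 ≤ s
      · have : t < 2 := by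
          by_contra h3; exact h ⟨h2, not_lt.1 h3⟩
        constructor <;> linarith
      · constructor <;> linarith
    refine (caseB hη (by linarith) (by linarith)).trans ?_
    have h1 := hM (s, t) ⟨⟨hs.le, ht.le⟩, ⟨hb.1, hb.2⟩⟩
    have h2 : (Jw s t)⁻¹ * (1 / (ε / 2) * Jw (s - ε / 2) (t - ε / 2)) ≤ |M| :=
      (le_abs_self _).trans (h1.trans (le_abs_self _))
    refine h2.trans ?_
    rw [le_div_iff₀ (by positivity)]
    refine le_trans ?_ (le_max_right _ _)
    have : s + t ≤ 2 * (2 + δ) := by linarith [hb.1, hb.2]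
    simp only [C2]
    gcongr
end
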